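/- Let G = G₁ *_K G₂ be an amalgamated free product along injective homomorphisms φ₁ : K → G₁ and φ₂ : K → G₂, let A and B be the images in G of G₁ and G₂ under the canonical inclusions, and U the image of K. Let H be a subgroup of G and H₀ the subgroup generated by (A ∩ H) ∪ (B ∩ H). Assume that: (1) there exists a ∈ A with a ∉ H·B; and (2) there exists b ∈ B with b ∉ U and aba⁻¹ ∈ H. Then aba⁻¹ ∉ H₀. -/

import Mathlib

/-!
The proof is by normal forms. Left multiplication by `A ∩ H` and `B ∩ H` preserves the set of
elements of `G` that are alternating products of factors from `(A ∩ H) \ U` and `(B ∩ H) \ U`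
followed by a last factor in `A \ H·B`: two adjacent factors from the same side merge, and a merged
factor that falls into `U` is absorbed by the next one; the last factor can never be absorbed,
because `A \ H·B` is stable under left multiplication by `A ∩ H` and misses `U`. This set contains
`a`, hence all of `H₀ a` (`alt_of_mem_closure`).

If `a b a⁻¹ ∈ H₀`, then `a b = (a b a⁻¹) a` has such an expression. Multiplying it on the left by
`b⁻¹ a⁻¹` gives an alternating product of elements outside `U` that equals `1`, contradicting the
normal form theorem (`alt_not_mem_base`). The step uses that `a⁻¹ x ∉ U` for `x ∈ A ∩ H`, which is
again `a ∉ H·B`.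
-/

/-- `Alt S T i g` says that `g = x₁ ⋯ xₙ t` (`n ≥ 0`), where the sides of the factors alternate, the
leftmost one is on side `i`, each `xₖ` lies in the `S` of its side and `t` in the `T` of its
side. -/
inductive Alt {P : Type*} [Group P] (S T : Bool → Set P) : Bool → P → Prop
  | last {i : Bool} {t : P} (ht : t ∈ T i) : Alt S T i t
  | cons {i : Bool} {x g : P} (hx : x ∈ S i) (hg : Alt S T (!i) g) : Alt S T i (x * g)

theorem Alt.mono {P : Type*} [Group P] {S S' T T' : Bool → Set P} (hS : ∀ i, S i ⊆ S' i)
    (hT : ∀ i, T i ⊆ T' i) {i : Bool} {g : P} (h : Alt S T i g) : Alt S' T' i g := by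
  induction h with
  | last ht => exact .last (hT _ ht)
  | cons hx _ ih => exact .cons (hS _ hx) ih

/-- An element with an alternating expression can be multiplied on the left by an element `x` of
`F j ∩ H`; the side of the leading factor may change. Here `F true`, `F false` are the two factors,
and the expressions have factors in `(F i ∩ H) \ U` and last factor in
`F true \ H·(F false)`. -/
theorem Alt.mul_left {P : Type*} [Group P] (F : Bool → Subgroup P) (U H : Subgroup P)
    (hU : ∀ i, U ≤ F i) {S T : Bool → Set P}
    (hS : ∀ i x, x ∈ S i ↔ x ∈ F i ∧ x ∈ H ∧ x ∉ U)
    (hT : ∀ i x, x ∈ T i ↔ i = true ∧ x ∈ F true ∧ ∀ h ∈ H, h * x ∉ F false)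
    {i j : Bool} {x g : P} (hx : x ∈ F j) (hxH : x ∈ H) (hg : Alt S T i g) :
    ∃ k, Alt S T k (x * g) := by
  have absorb : ∀ {i : Bool} {u g : P}, u ∈ U → u ∈ H → Alt S T i g → Alt S T i (u * g) := by
    intro i u g hu huH hg
    cases hg with
    | last ht =>
      obtain ⟨hi, ht, hn⟩ := (hT _ _).1 ht
      refine .last ((hT _ _).2 ⟨hi, mul_mem (hU _ hu) ht, fun h hh => ?_⟩)
      rw [← mul_assoc]
      exact hn _ (mul_mem hh huH)
    | cons hy hg =>
      obtain ⟨hy, hyH, hyU⟩ := (hS _ _).1 hy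
      rw [← mul_assoc]
      exact .cons ((hS _ _).2 ⟨mul_mem (hU _ hu) hy, mul_mem huH hyH,
        fun h => hyU ((Subgroup.mul_mem_cancel_left _ hu).1 h)⟩) hg
  by_cases hxU : x ∈ U
  · exact ⟨i, absorb hxU hxH hg⟩
  by_cases hij : i = j
  · subst hij
    cases hg with
    | last ht =>
      obtain ⟨rfl, ht, hn⟩ := (hT _ _).1 ht
      refine ⟨true, .last ((hT _ _).2 ⟨rfl, mul_mem hx ht, fun h hh => ?_⟩)⟩
      rw [← mul_assoc]
      exact hn _ (mul_mem hh hxH)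
    | @cons _ y g hy hg =>
      obtain ⟨hy, hyH, hyU⟩ := (hS _ _).1 hy
      rw [← mul_assoc]
      by_cases hxy : x * y ∈ U
      · exact ⟨_, absorb hxy (mul_mem hxH hyH) hg⟩
      · exact ⟨_, .cons ((hS _ _).2 ⟨mul_mem hx hy, mul_mem hxH hyH, hxy⟩) hg⟩
  · have hij' : i = !j := by cases i <;> cases j <;> simp_all
    subst hij'
    exact ⟨j, .cons ((hS _ _).2 ⟨hx, hxH, hxU⟩) hg⟩

/-- If `a ∈ F true` lies outside `H·(F false)`, every element of the coset `H₀ a` has an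
alternating expression as in `Alt.mul_left`. -/
theorem alt_of_mem_closure {P : Type*} [Group P] (F : Bool → Subgroup P) (U H : Subgroup P)
    (hU : ∀ i, U ≤ F i) {S T : Bool → Set P}
    (hS : ∀ i x, x ∈ S i ↔ x ∈ F i ∧ x ∈ H ∧ x ∉ U)
    (hT : ∀ i x, x ∈ T i ↔ i = true ∧ x ∈ F true ∧ ∀ h ∈ H, h * x ∉ F false)
    {a g : P} (ha : a ∈ T true)
    (hg : g ∈ Subgroup.closure (((F true : Set P) ∩ H) ∪ ((F false : Set P) ∩ H))) :
    ∃ k, Alt S T k (g * a) := by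
  induction hg using Subgroup.closure_induction_left with
  | one => exact ⟨true, by simpa using Alt.last ha⟩
  | mul_left x hx y _ ih =>
    obtain ⟨k, hk⟩ := ih
    rw [mul_assoc]
    rcases hx with hx | hx
    · exact hk.mul_left F U H hU hS hT hx.1 hx.2
    · exact hk.mul_left F U H hU hS hT hx.1 hx.2
  | inv_mul_cancel x hx y _ ih =>
    obtain ⟨k, hk⟩ := ih
    rw [mul_assoc]
    rcases hx with hx | hx
    · exact hk.mul_left F U H hU hS hT (inv_mem hx.1) (inv_mem hx.2)
    · exact hk.mul_left F U H hU hS hT (inv_mem hx.1) (inv_mem hx.2)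

open Monoid Monoid.PushoutI in
/-- The normal form theorem: an alternating product of elements of the two factors that lie
outside the amalgamated subgroup does not lie in the amalgamated subgroup. -/
theorem alt_not_mem_base {K : Type*} [Group K] {G : Bool → Type*} [∀ i, Group (G i)]
    {φ : ∀ i, K →* G i} (hφ : ∀ i, Function.Injective (φ i)) {S : Bool → Set (PushoutI φ)}
    (hS : ∀ i x, x ∈ S i → x ∈ (of (φ := φ) i).range ∧ x ∉ (base φ).range)
    {i : Bool} {g : PushoutI φ} (h : Alt S S i g) : g ∉ (base φ).range := by
  have letter : ∀ i x, x ∈ S i → ∃ y : G i, of i y = x ∧ y ∉ (φ i).range ∧ y ≠ 1 := by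
    intro i x hx
    obtain ⟨⟨y, rfl⟩, hy⟩ := hS i x hx
    have hy' : y ∉ (φ i).range := by
      rintro ⟨k, rfl⟩
      exact hy ⟨k, (of_apply_eq_base φ i k).symm⟩
    exact ⟨y, rfl, hy', fun h => hy' (h ▸ one_mem _)⟩
  have key : ∃ w : CoprodI.Word G, w.fstIdx = some i ∧ Reduced φ w ∧ ofCoprodI w.prod = g := by
    induction h with
    | @last i t ht =>
      obtain ⟨y, rfl, hy, hy1⟩ := letter _ _ ht
      have he : (CoprodI.Word.empty : CoprodI.Word G).fstIdx ≠ some i := by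
        simp [CoprodI.Word.fstIdx, CoprodI.Word.empty]
      refine ⟨CoprodI.Word.cons y .empty he hy1,
        by simp [CoprodI.Word.fstIdx, CoprodI.Word.cons], ?_, by simp⟩
      simpa [Reduced, CoprodI.Word.cons, CoprodI.Word.empty] using hy
    | @cons i x g hx _ ih =>
      obtain ⟨y, rfl, hy, hy1⟩ := letter _ _ hx
      obtain ⟨w, hw, hr, rfl⟩ := ih
      refine ⟨CoprodI.Word.cons y w (by rw [hw]; simp) hy1,
        by simp [CoprodI.Word.fstIdx, CoprodI.Word.cons], ?_, by simp⟩
      intro l hl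
      rcases List.mem_cons.1 hl with rfl | hl
      · exact hy
      · exact hr l hl
  obtain ⟨w, hw, hr, rfl⟩ := key
  intro hmem
  rw [hr.eq_empty_of_mem_range hφ hmem] at hw
  simp [CoprodI.Word.fstIdx, CoprodI.Word.empty] at hw

open Pointwise

/-- Let `G = G₁ *_K G₂` (here: the pushout `Monoid.PushoutI φ` of the
injective homomorphisms `φ true : K → G true` and `φ false : K → G false`), let `A`, `B` be
the images of the two factors, `U` the image of `K`, `H ≤ G` and
`H₀ = ⟨(A ∩ H) ∪ (B ∩ H)⟩`. If there are `a ∈ A` with `a ∉ H·B` and `b ∈ B` with `b ∉ U`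
and `a b a⁻¹ ∈ H`, then `a b a⁻¹ ∉ H₀`. -/
theorem statement13 (K : Type*) [Group K] (G : Bool → Type*) [∀ i, Group (G i)]
    (φ : ∀ i, K →* G i) (hφ : ∀ i, Function.Injective (φ i))
    (H : Subgroup (Monoid.PushoutI φ))
    (A : Subgroup (Monoid.PushoutI φ)) (hA : A = (Monoid.PushoutI.of (φ := φ) true).range)
    (B : Subgroup (Monoid.PushoutI φ)) (hB : B = (Monoid.PushoutI.of (φ := φ) false).range)
    (U : Subgroup (Monoid.PushoutI φ)) (hU : U = (Monoid.PushoutI.base φ).range)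
    (H₀ : Subgroup (Monoid.PushoutI φ))
    (hH₀ : H₀ = Subgroup.closure ((↑A ∩ ↑H) ∪ (↑B ∩ ↑H)))
    (a : Monoid.PushoutI φ) (ha : a ∈ A)
    (ha' : a ∉ (↑H : Set (Monoid.PushoutI φ)) * (↑B : Set (Monoid.PushoutI φ)))
    (b : Monoid.PushoutI φ) (hb : b ∈ B) (hb' : b ∉ U)
    (hconj : a * b * a⁻¹ ∈ H) :
    a * b * a⁻¹ ∉ H₀ := by
  intro hc
  subst hA hB hU hH₀
  let F : Bool → Subgroup (Monoid.PushoutI φ) := fun i => (Monoid.PushoutI.of (φ := φ) i).range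
  let U := (Monoid.PushoutI.base φ).range
  have hUF : ∀ i, U ≤ F i := by
    rintro i _ ⟨k, rfl⟩
    exact ⟨φ i k, Monoid.PushoutI.of_apply_eq_base φ i k⟩
  have hAB : ∀ x, x ∈ F true → x ∈ F false → x ∈ U := fun x h₁ h₂ =>
    (Monoid.PushoutI.inf_of_range_eq_base_range hφ (show true ≠ false by simp)).le ⟨h₁, h₂⟩
  let S : Bool → Set (Monoid.PushoutI φ) := fun i => {x | x ∈ F i ∧ x ∈ H ∧ x ∉ U}
  let T : Bool → Set (Monoid.PushoutI φ) := fun i =>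
    {x | i = true ∧ x ∈ F true ∧ ∀ h ∈ H, h * x ∉ F false}
  let N : Bool → Set (Monoid.PushoutI φ) := fun i => {x | x ∈ F i ∧ x ∉ U}
  have haT : ∀ h ∈ H, h * a ∉ F false := fun h hh hm =>
    ha' ⟨h⁻¹, inv_mem hh, h * a, hm, by simp⟩
  have haU : a ∉ U := fun h => haT 1 (one_mem _) (by simpa using hUF false h)
  obtain ⟨k, hk⟩ := alt_of_mem_closure F U H hUF (S := S) (T := T) (fun _ _ => Iff.rfl)
    (fun _ _ => Iff.rfl) ⟨rfl, ha, haT⟩ hc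
  rw [inv_mul_cancel_right] at hk
  have hSN : ∀ i, S i ⊆ N i := fun i x hx => ⟨hx.1, hx.2.2⟩
  have hTN : ∀ i, T i ⊆ N i := by
    rintro i x ⟨rfl, hx, hn⟩
    exact ⟨hx, fun h => hn 1 (one_mem _) (by simpa using hUF false h)⟩
  have hbN : b⁻¹ ∈ N false := ⟨inv_mem hb, fun h => hb' (inv_mem_iff.1 h)⟩
  have hN := fun {i g} => alt_not_mem_base hφ (S := N) (fun _ _ hx => hx) (i := i) (g := g)
  generalize hab : a * b = g at hk
  have hone : b⁻¹ * (a⁻¹ * g) = 1 := by rw [← hab]; group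
  cases k with
  | false =>
    have haN : a⁻¹ ∈ N true := ⟨inv_mem ha, fun h => haU (inv_mem_iff.1 h)⟩
    exact hN (.cons hbN (.cons haN (hk.mono hSN hTN))) (hone ▸ one_mem _)
  | true =>
    cases hk with
    | last ht =>
      exact hb' (hAB b ((Subgroup.mul_mem_cancel_left _ ha).1 (hab ▸ ht.2.1)) hb)
    | @cons _ x g hx hg =>
      -- `a⁻¹ x ∈ U` would give `x⁻¹ a ∈ U ≤ F false` with `x ∈ H`, i.e. `a ∈ H·B`.
      have hxN : a⁻¹ * x ∈ N true := by
        refine ⟨mul_mem (inv_mem ha) hx.1, fun h => haT x⁻¹ (inv_mem hx.2.1) (hUF false ?_)⟩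
        simpa using inv_mem h
      rw [← mul_assoc a⁻¹] at hone
      exact hN (.cons hbN (.cons hxN (hg.mono hSN hTN))) (hone ▸ one_mem _)
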